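/- The relation rE on Exp is terminating and confluent, and its equivalence closure coincides with ≈: for all t u : Exp, EqvGen rE t u if and only if t ≈ u. -/

import Mathlib

/-- Arithmetic expressions. -/
inductive Exp : Type
  | Zero : Exp
  | One : Exp
  | Opp : Exp → Exp
  | Plus : Exp → Exp → Exp
deriving DecidableEq

/-- The smallest equivalence relation on `Exp` compatible with `Opp` and `Plus` such
that `Zero` is neutral for `Plus`. -/
inductive expEq : Exp → Exp → Prop
  | plusZero (t : Exp) : expEq (Exp.Plus t Exp.Zero) t
  | zeroPlus (t : Exp) : expEq (Exp.Plus Exp.Zero t) t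
  | refl (t : Exp) : expEq t t
  | symm {t u : Exp} : expEq t u → expEq u t
  | trans {t u v : Exp} : expEq t u → expEq u v → expEq t v
  | opp {t t' : Exp} : expEq t t' → expEq (Exp.Opp t) (Exp.Opp t')
  | plus {t t' u u' : Exp} : expEq t t' → expEq u u' →
      expEq (Exp.Plus t u) (Exp.Plus t' u')

/-- The rewrite relation erasing neutral `Zero`s, closed under contexts. -/
inductive rE : Exp → Exp → Prop
  | plusZero (t : Exp) : rE (Exp.Plus t Exp.Zero) t
  | zeroPlus (t : Exp) : rE (Exp.Plus Exp.Zero t) t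
  | opp {t t' : Exp} : rE t t' → rE (Exp.Opp t) (Exp.Opp t')
  | plusL {t t' : Exp} (u : Exp) : rE t t' → rE (Exp.Plus t u) (Exp.Plus t' u)
  | plusR {t t' : Exp} (u : Exp) : rE t t' → rE (Exp.Plus u t) (Exp.Plus u t')

/-- Smart addition erasing neutral zeros. -/
def padd (a b : Exp) : Exp :=
  if a = Exp.Zero then b else if b = Exp.Zero then a else Exp.Plus a b

/-- Normal form. -/
def nf : Exp → Exp
  | Exp.Zero => Exp.Zero
  | Exp.One => Exp.One
  | Exp.Opp t => Exp.Opp (nf t)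
  | Exp.Plus t u => padd (nf t) (nf u)

/-- Size. -/
def esize : Exp → ℕ
  | Exp.Zero => 1
  | Exp.One => 1
  | Exp.Opp t => esize t + 1
  | Exp.Plus t u => esize t + esize u + 1

theorem rE_esize {t u : Exp} (h : rE t u) : esize u < esize t := by
  induction h <;> simp only [esize] <;> omega

theorem rE_nf {t u : Exp} (h : rE t u) : nf t = nf u := by
  induction h with
  | plusZero t => simp only [nf, padd]; split_ifs <;> simp_all
  | zeroPlus t => simp [nf, padd]
  | opp _ ih => simp [nf, ih]
  | plusL _ _ ih => simp [nf, ih]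
  | plusR _ _ ih => simp [nf, ih]

theorem rE_star_nf {t u : Exp} (h : Relation.ReflTransGen rE t u) : nf t = nf u := by
  induction h with
  | refl => rfl
  | tail _ h ih => exact ih.trans (rE_nf h)

theorem star_plus {t t' u u' : Exp} (h : Relation.ReflTransGen rE t t')
    (k : Relation.ReflTransGen rE u u') :
    Relation.ReflTransGen rE (Exp.Plus t u) (Exp.Plus t' u') :=
  (h.lift (fun x => Exp.Plus x u) (fun _ _ => rE.plusL u)).trans
    (k.lift (fun x => Exp.Plus t' x) (fun _ _ => rE.plusR t'))

theorem star_padd (a b : Exp) : Relation.ReflTransGen rE (Exp.Plus a b) (padd a b) := by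
  unfold padd
  split_ifs with h k
  · subst h; exact .single (rE.zeroPlus b)
  · subst k; exact .single (rE.plusZero a)
  · exact .refl

theorem star_to_nf (t : Exp) : Relation.ReflTransGen rE t (nf t) := by
  induction t with
  | Zero => exact .refl
  | One => exact .refl
  | Opp t ih => exact ih.lift Exp.Opp (fun _ _ => rE.opp)
  | Plus t u ih ih' => exact (star_plus ih ih').trans (star_padd _ _)

theorem rE_expEq {t u : Exp} (h : rE t u) : expEq t u := by
  induction h with
  | plusZero t => exact .plusZero t
  | zeroPlus t => exact .zeroPlus t
  | opp _ ih => exact .opp ih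
  | plusL u _ ih => exact .plus ih (.refl u)
  | plusR u _ ih => exact .plus (.refl u) ih

theorem expEq_nf {t u : Exp} (h : expEq t u) : nf t = nf u := by
  induction h with
  | plusZero t => exact rE_nf (.plusZero t)
  | zeroPlus t => exact rE_nf (.zeroPlus t)
  | refl => rfl
  | symm _ ih => exact ih.symm
  | trans _ _ ih ih' => exact ih.trans ih'
  | opp _ ih => simp [nf, ih]
  | plus _ _ ih ih' => simp [nf, ih, ih']

theorem star_eqv {t u : Exp} (h : Relation.ReflTransGen rE t u) : Relation.EqvGen rE t u := by
  induction h with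
  | refl => exact .refl _
  | tail _ h ih => exact .trans _ _ _ ih (.rel _ _ h)

theorem rE_terminating_confluent_and_eqvGen_eq :
    WellFounded (fun t u : Exp => rE u t) ∧
    (∀ t u v : Exp, Relation.ReflTransGen rE t u → Relation.ReflTransGen rE t v →
        ∃ w, Relation.ReflTransGen rE u w ∧ Relation.ReflTransGen rE v w) ∧
    (∀ t u : Exp, Relation.EqvGen rE t u ↔ expEq t u) := by
  refine ⟨?_, ?_, ?_⟩
  · exact Subrelation.wf (fun h => rE_esize h) (InvImage.wf esize Nat.lt_wfRel.wf)
  · intro t u v h k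
    refine ⟨nf t, ?_, ?_⟩
    · rw [rE_star_nf h]; exact star_to_nf u
    · rw [rE_star_nf k]; exact star_to_nf v
  · intro t u
    constructor
    · intro h
      induction h with
      | rel _ _ h => exact rE_expEq h
      | refl => exact .refl _
      | symm _ _ _ ih => exact .symm ih
      | trans _ _ _ _ _ ih ih' => exact .trans ih ih'
    · intro h
      have e := star_eqv (star_to_nf t)
      rw [expEq_nf h] at e
      exact .trans _ _ _ e (.symm _ _ (star_eqv (star_to_nf u)))
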